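/- arXiv:2505.11469 — 2 statements merged into one kernel-verified Lean document; each statement's English description precedes it below -/
import Mathlib

section
/- Let ℓ ≥ 2 and n ≥ 1 be integers, let y, u > 0 be reals, and let θ ∈ (−π, π). Then the real part of q_{ℓ,n}(y,u,θ) equals 2y · Σ_{δ_1,…,δ_ℓ = 1}^{∞} δ_1^{ℓ−2} δ_2^{ℓ−3} ⋯ δ_{ℓ−2} · δ_ℓ^{−1} · e^{−δ_1⋯δ_ℓ u} · sin²(δ_1⋯δ_ℓ θ / 2), and consequently Re q_{ℓ,n}(y,u,θ) ≥ 2y · Σ_{k=1}^{∞} k^{ℓ−2} e^{−ku} sin²(kθ/2). -/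
open Filter Topology Real MeasureTheory Asymptotics

noncomputable section

/-- Number of joint orbits of the subgroup generated by a tuple of permutations. -/
def kappa {ℓ n : ℕ} (σ : Fin ℓ → Equiv.Perm (Fin n)) : ℕ :=
  Nat.card (MulAction.orbitRel.Quotient (Subgroup.closure (Set.range σ)) (Fin n))

/-- `Acount ℓ n k` is the number of commuting `ℓ`-tuples of permutations of `{1,…,n}`
with exactly `k` joint orbits. -/
def Acount (ℓ n k : ℕ) : ℕ :=
  Nat.card {σ : Fin ℓ → Equiv.Perm (Fin n) //
    (∀ i j, σ i * σ j = σ j * σ i) ∧ kappa σ = k}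

/-- `Hpoly ℓ n x = (1/n!) ∑_k A(ℓ,n,k) x^k`. -/
def Hpoly (ℓ n : ℕ) (x : ℝ) : ℝ :=
  (1 / (n.factorial : ℝ)) * ∑ k ∈ Finset.range (n + 1), (Acount ℓ n k : ℝ) * x ^ k

/-- Expectation, under the Ewens-like measure `P_{ℓ,n,x}`, of `g(K_{ℓ,n})`. -/
def expectK (ℓ n : ℕ) (x : ℝ) (g : ℕ → ℝ) : ℝ :=
  (∑ k ∈ Finset.range (n + 1), g k * (Acount ℓ n k : ℝ) * x ^ k) /
    (∑ k ∈ Finset.range (n + 1), (Acount ℓ n k : ℝ) * x ^ k)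

/-- Mean of `K_{ℓ,n}` under `P_{ℓ,n,x}`. -/
def meanK (ℓ n : ℕ) (x : ℝ) : ℝ := expectK ℓ n x (fun k => (k : ℝ))

/-- Variance of `K_{ℓ,n}` under `P_{ℓ,n,x}`. -/
def varK (ℓ n : ℕ) (x : ℝ) : ℝ :=
  expectK ℓ n x (fun k => ((k : ℝ) - meanK ℓ n x) ^ 2)

/-- Real Riemann zeta values (as a series), `zetaR s = ∑_{m ≥ 1} m^{-s}`. -/
def zetaR (s : ℝ) : ℝ := ∑' m : ℕ, 1 / ((m : ℝ) + 1) ^ s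

/-- The constant `K_ℓ = (ℓ-1)! ζ(2)⋯ζ(ℓ)`. -/
def Kconst (ℓ : ℕ) : ℝ := ((ℓ - 1).factorial : ℝ) * ∏ j ∈ Finset.Icc 2 ℓ, zetaR (j : ℝ)

/-- The multiple series `Z^{[ℓ]}_{α_1,…,α_ℓ}(t)` with complex exponents. -/
def Zc (ℓ : ℕ) (α : Fin ℓ → ℂ) (t : ℝ) : ℂ :=
  ∑' δ : Fin ℓ → ℕ+,
    (∏ i, ((δ i : ℕ) : ℂ) ^ (α i - 1)) *
      Complex.exp (-(((∏ i, ((δ i : ℕ) : ℝ)) * t : ℝ) : ℂ))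

/-- The multiple series `Z^{[ℓ]}_{α_1,…,α_ℓ}(t)` with real exponents. -/
def Zr (ℓ : ℕ) (α : Fin ℓ → ℝ) (t : ℝ) : ℝ :=
  ∑' δ : Fin ℓ → ℕ+,
    (∏ i, ((δ i : ℕ) : ℝ) ^ (α i - 1)) *
      Real.exp (-(∏ i, ((δ i : ℕ) : ℝ)) * t)

/-- The staircase series `Z_m^{[ℓ]}(t) = Z^{[ℓ]}_{m,m-1,…,m-ℓ+1}(t)`. -/
def Zstair (ℓ : ℕ) (m : ℤ) (t : ℝ) : ℝ :=
  Zr ℓ (fun i => (m : ℝ) - (i : ℕ)) t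

/-- The inverse function `(Z_ℓ^{[ℓ]})^{-1} : (0,∞) → (0,∞)`. -/
def ZstairInv (ℓ : ℕ) (u : ℝ) : ℝ :=
  Function.invFunOn (Zstair ℓ ℓ) (Set.Ioi 0) u

/-- The function `q_{ℓ,n}(y,u,θ)` from the saddle point analysis. -/
def qfun (ℓ n : ℕ) (y u θ : ℝ) : ℂ :=
  Complex.I * (n : ℂ) * (θ : ℂ) - (y : ℂ) * ∑' δ : Fin ℓ → ℕ+,
    (∏ i, ((δ i : ℕ) : ℂ) ^ ((ℓ : ℤ) - 2 - (i : ℕ))) *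
      Complex.exp (-(((∏ i, ((δ i : ℕ) : ℝ)) * u : ℝ) : ℂ)) *
      (Complex.exp (Complex.I * (((∏ i, ((δ i : ℕ) : ℝ)) * θ : ℝ) : ℂ)) - 1)

/-- The normalizing sequence `b_n = ((x K_ℓ)^{1/(2ℓ)}/√(ℓ(ℓ-1))) n^{(ℓ-1)/(2ℓ)}`. -/
def bseq (ℓ : ℕ) (x : ℝ) (n : ℕ) : ℝ :=
  (x * Kconst ℓ) ^ ((1 : ℝ) / (2 * (ℓ : ℝ))) / Real.sqrt ((ℓ : ℝ) * ((ℓ : ℝ) - 1)) *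
    (n : ℝ) ^ (((ℓ : ℝ) - 1) / (2 * (ℓ : ℝ)))

/-- The sequence `x_n = x e^{s/b_n}`. -/
def xseq (ℓ : ℕ) (x s : ℝ) (n : ℕ) : ℝ := x * Real.exp (s / bseq ℓ x n)

/-- The saddle point sequence `t_n = (Z_ℓ^{[ℓ]})^{-1}(n/x)`. -/
def tseq (ℓ : ℕ) (x : ℝ) (n : ℕ) : ℝ := ZstairInv ℓ ((n : ℝ) / x)

end

lemma aux_summable_prod (f : ℕ+ → ℝ) (hf0 : ∀ k, 0 ≤ f k) (hf : Summable f) (m : ℕ) :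
    Summable (fun δ : Fin m → ℕ+ => ∏ i, f (δ i)) := by
  induction m with
  | zero => exact Summable.of_finite
  | succ m ih =>
    have h := hf.mul_of_nonneg ih (fun k => hf0 k)
      (fun δ => Finset.prod_nonneg (fun i _ => hf0 _))
    rw [← (Fin.consEquiv (fun _ : Fin (m+1) => ℕ+)).summable_iff]
    refine h.congr ?_
    rintro ⟨k, δ⟩
    simp [Fin.consEquiv, Fin.prod_univ_succ]

lemma aux_summable (ℓ : ℕ) (u : ℝ) (hu : 0 < u) :
    Summable (fun δ : Fin ℓ → ℕ+ =>
      (∏ i, ((δ i : ℕ) : ℝ) ^ ((ℓ : ℤ) - 2 - (i : ℕ))) *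
          Real.exp (-(∏ i, ((δ i : ℕ) : ℝ)) * u)) := by
  have h1 : Summable (fun k : ℕ+ => (((k : ℕ) : ℝ) ^ 2)⁻¹) :=
    (Real.summable_nat_pow_inv.2 one_lt_two).comp_injective PNat.coe_injective
  have h2 := aux_summable_prod _ (fun k => by positivity) h1 ℓ
  refine Summable.of_nonneg_of_le (fun δ => ?_) (fun δ => ?_)
    (h2.mul_left ((ℓ + 2).factorial / u ^ (ℓ + 2)))
  · exact mul_nonneg (Finset.prod_nonneg fun i _ => by positivity) (Real.exp_pos _).le
  · set P : ℝ := ∏ i, ((δ i : ℕ) : ℝ) with hP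
    have hPpos : 0 < P := Finset.prod_pos fun i _ => by exact_mod_cast (δ i).pos
    have hA : (∏ i, ((δ i : ℕ) : ℝ) ^ ((ℓ : ℤ) - 2 - (i : ℕ))) ≤ P ^ ℓ := by
      rw [hP, ← Finset.prod_pow]
      refine Finset.prod_le_prod (fun i _ => by positivity) (fun i _ => ?_)
      rw [← zpow_natCast]
      refine zpow_le_zpow_right₀ ?_ (by omega)
      exact_mod_cast (δ i).pos
    have hB : (∏ i, (((δ i : ℕ) : ℝ) ^ 2)⁻¹) = (P ^ 2)⁻¹ := by
      rw [Finset.prod_inv_distrib, Finset.prod_pow]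
    rw [hB]
    have hE := Real.pow_div_factorial_le_exp (P * u) (by positivity) (ℓ + 2)
    have hC : Real.exp (-P * u) ≤ (ℓ + 2).factorial / (P * u) ^ (ℓ + 2) := by
      rw [neg_mul, Real.exp_neg, inv_le_comm₀ (Real.exp_pos _) (by positivity), inv_div]
      exact hE
    calc _ ≤ P ^ ℓ * ((ℓ + 2).factorial / (P * u) ^ (ℓ + 2)) := by
          gcongr
      _ = _ := by
          rw [mul_pow]; field_simp; try ring

/-- the real part of `q_{ℓ,n}(y,u,θ)` is the explicit nonnegative series, and is
bounded below by the one-dimensional sum `2y ∑_k k^{ℓ-2} e^{-ku} sin²(kθ/2)`. -/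
theorem qfun_re_formula (ℓ n : ℕ) (hℓ : 2 ≤ ℓ) (hn : 1 ≤ n) (y u θ : ℝ)
    (hy : 0 < y) (hu : 0 < u) (hθ : θ ∈ Set.Ioo (-π) π) :
    (qfun ℓ n y u θ).re =
      2 * y * ∑' δ : Fin ℓ → ℕ+,
        (∏ i, ((δ i : ℕ) : ℝ) ^ ((ℓ : ℤ) - 2 - (i : ℕ))) *
          Real.exp (-(∏ i, ((δ i : ℕ) : ℝ)) * u) *
          Real.sin ((∏ i, ((δ i : ℕ) : ℝ)) * θ / 2) ^ 2 ∧
    2 * y * ∑' k : ℕ+,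
        ((k : ℕ) : ℝ) ^ ((ℓ : ℤ) - 2) * Real.exp (-((k : ℕ) : ℝ) * u) *
          Real.sin (((k : ℕ) : ℝ) * θ / 2) ^ 2 ≤
      (qfun ℓ n y u θ).re := by
  have hS := aux_summable ℓ u hu
  have hnn : ∀ δ : Fin ℓ → ℕ+, 0 ≤ (∏ i, ((δ i : ℕ) : ℝ) ^ ((ℓ : ℤ) - 2 - (i : ℕ))) *
          Real.exp (-(∏ i, ((δ i : ℕ) : ℝ)) * u) := fun δ =>
    mul_nonneg (Finset.prod_nonneg fun i _ => by positivity) (Real.exp_pos _).le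
  have hterm : ∀ δ : Fin ℓ → ℕ+,
      (∏ i, ((δ i : ℕ) : ℂ) ^ ((ℓ : ℤ) - 2 - (i : ℕ))) *
      Complex.exp (-(((∏ i, ((δ i : ℕ) : ℝ)) * u : ℝ) : ℂ)) =
      (((∏ i, ((δ i : ℕ) : ℝ) ^ ((ℓ : ℤ) - 2 - (i : ℕ))) *
          Real.exp (-(∏ i, ((δ i : ℕ) : ℝ)) * u) : ℝ) : ℂ) := by
    intro δ
    push_cast
    rw [neg_mul]
  have hSc : Summable (fun δ : Fin ℓ → ℕ+ =>
      (∏ i, ((δ i : ℕ) : ℂ) ^ ((ℓ : ℤ) - 2 - (i : ℕ))) *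
      Complex.exp (-(((∏ i, ((δ i : ℕ) : ℝ)) * u : ℝ) : ℂ)) *
      (Complex.exp (Complex.I * (((∏ i, ((δ i : ℕ) : ℝ)) * θ : ℝ) : ℂ)) - 1)) := by
    refine Summable.of_norm_bounded (hS.mul_right 2) (fun δ => ?_)
    rw [hterm, norm_mul, Complex.norm_real, Real.norm_of_nonneg (hnn δ)]
    refine mul_le_mul_of_nonneg_left ?_ (hnn δ)
    refine (norm_sub_le _ _).trans ?_
    rw [mul_comm Complex.I, Complex.norm_exp_ofReal_mul_I]
    norm_num
  have hre : (qfun ℓ n y u θ).re =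
      2 * y * ∑' δ : Fin ℓ → ℕ+,
        (∏ i, ((δ i : ℕ) : ℝ) ^ ((ℓ : ℤ) - 2 - (i : ℕ))) *
          Real.exp (-(∏ i, ((δ i : ℕ) : ℝ)) * u) *
          Real.sin ((∏ i, ((δ i : ℕ) : ℝ)) * θ / 2) ^ 2 := by
    have h0 : (Complex.I * (n : ℂ) * (θ : ℂ)).re = 0 := by simp
    rw [qfun, Complex.sub_re, Complex.re_ofReal_mul, Complex.re_tsum hSc, h0, zero_sub,
      ← mul_neg, ← tsum_neg, ← tsum_mul_left, ← tsum_mul_left]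
    refine tsum_congr fun δ => ?_
    rw [hterm, Complex.re_ofReal_mul, mul_comm Complex.I, Complex.sub_re,
      Complex.exp_ofReal_mul_I_re, Complex.one_re, Real.sin_sq_eq_half_sub]
    rw [show 2 * ((∏ i, ((δ i : ℕ) : ℝ)) * θ / 2) = (∏ i, ((δ i : ℕ) : ℝ)) * θ by ring]
    ring
  refine ⟨hre, ?_⟩
  rw [hre]
  refine mul_le_mul_of_nonneg_left ?_ (by positivity)
  have hS2 : Summable (fun δ : Fin ℓ → ℕ+ =>
      (∏ i, ((δ i : ℕ) : ℝ) ^ ((ℓ : ℤ) - 2 - (i : ℕ))) *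
          Real.exp (-(∏ i, ((δ i : ℕ) : ℝ)) * u) *
          Real.sin ((∏ i, ((δ i : ℕ) : ℝ)) * θ / 2) ^ 2) :=
    Summable.of_nonneg_of_le (fun δ => mul_nonneg (hnn δ) (sq_nonneg _))
      (fun δ => mul_le_of_le_one_right (hnn δ) (Real.sin_sq_le_one _)) hS
  obtain ⟨m, rfl⟩ : ∃ m, ℓ = m + 1 := ⟨ℓ - 1, by omega⟩
  let e : ℕ+ → (Fin (m + 1) → ℕ+) := fun k => Fin.cons k (fun _ => 1)
  have he : Function.Injective e := fun a b h => by
    simpa [e] using congrFun h 0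
  have := tsum_comp_le_tsum_of_inj hS2 (fun δ => mul_nonneg (hnn δ) (sq_nonneg _)) he
  refine le_trans (le_of_eq ?_) this
  congr 1
  funext k
  simp [e, Fin.prod_univ_succ]
end

section
/- Let ℓ ≥ 2 be an integer, let x > 0 and s ∈ ℝ, let b_n := ((x·K_ℓ)^{1/(2ℓ)}/√(ℓ(ℓ−1))) · n^{(ℓ−1)/(2ℓ)}, x_n := x·e^{s/b_n}, and t_n := (Z_ℓ^{[ℓ]})^{−1}(n/x). Define J_{ℓ,n}(y,t) := (1/2π) ∫_{−π}^{π} e^{−q_{ℓ,n}(y,t,θ)} dθ. Then, as n → ∞, J_{ℓ,n}(x_n, t_n) ~ ((x·K_ℓ)^{1/(2ℓ)}/√(2πℓ)) · n^{−(ℓ+1)/(2ℓ)} · e^{−(ℓ−1)s²/2}, i.e. the ratio of the two sides tends to 1. -/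
open Filter Topology Real MeasureTheory Asymptotics

lemma hasSum_pos_choose (k : ℕ) {τ : ℝ} (hτ : 0 < τ) :
    HasSum (fun n : ℕ => ((n + k).choose k : ℝ) * Real.exp (-τ) ^ n) (1 / (1 - Real.exp (-τ)) ^ (k + 1)) := by
  apply hasSum_choose_mul_geometric_of_norm_lt_one
  rw [Real.norm_eq_abs, abs_of_pos (Real.exp_pos _)]
  exact Real.exp_lt_one_iff.2 (by linarith)

lemma summable_g (k : ℕ) {τ : ℝ} (hτ : 0 < τ) :
    Summable (fun n : ℕ => ((n : ℝ) + 1) ^ k * Real.exp (-((n + 1) * τ))) := by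
  have h := summable_pow_mul_geometric_of_norm_lt_one k (r := Real.exp (-τ)) (by
    rw [Real.norm_eq_abs, abs_of_pos (Real.exp_pos _)]
    exact Real.exp_lt_one_iff.2 (by linarith))
  have := (summable_nat_add_iff 1).2 h
  refine this.congr fun n => ?_
  push_cast
  congr 1
  rw [← Real.exp_nat_mul]
  push_cast
  congr 1; ring

lemma exp_pow_aux (n : ℕ) (τ : ℝ) : Real.exp (-τ) ^ n = Real.exp (-(n * τ)) := by
  rw [← Real.exp_nat_mul]; congr 1; ring

lemma g_upper (k : ℕ) {τ : ℝ} (hτ : 0 < τ) :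
    ∑' n : ℕ, ((n : ℝ) + 1) ^ k * Real.exp (-((n + 1) * τ)) ≤
      k.factorial * Real.exp (-τ) * (1 / (1 - Real.exp (-τ)) ^ (k + 1)) := by
  have h := (hasSum_pos_choose k hτ).mul_left (k.factorial * Real.exp (-τ))
  rw [← h.tsum_eq]
  refine (summable_g k hτ).tsum_le_tsum (fun n => ?_) h.summable
  have h1 : ((n : ℝ) + 1) ^ k ≤ k.factorial * ((n + k).choose k : ℝ) := by
    have := Nat.pow_succ_le_ascFactorial (n + 1) k
    rw [Nat.ascFactorial_eq_factorial_mul_choose] at this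
    exact_mod_cast this
  calc _ ≤ k.factorial * ((n + k).choose k : ℝ) * Real.exp (-((n + 1) * τ)) := by gcongr
    _ = _ := by
      rw [exp_pow_aux, show -(((n : ℝ) + 1) * τ) = -τ + -(n * τ) by ring, Real.exp_add]; ring

lemma g_lower (k : ℕ) {τ : ℝ} (hτ : 0 < τ) :
    k.factorial * Real.exp (-τ) ^ (k + 1) * (1 / (1 - Real.exp (-τ)) ^ (k + 1)) ≤
    ∑' n : ℕ, ((n : ℝ) + 1) ^ k * Real.exp (-((n + 1) * τ)) := by
  have h := (hasSum_pos_choose k hτ).mul_left (k.factorial * Real.exp (-τ) ^ (k + 1))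
  rw [← h.tsum_eq, ← (summable_g k hτ).sum_add_tsum_nat_add k]
  refine le_trans ?_ (le_add_of_nonneg_left (Finset.sum_nonneg fun i _ => by positivity))
  refine h.summable.tsum_le_tsum (fun n => ?_) ((summable_nat_add_iff k).2 (summable_g k hτ))
  have h1 : k.factorial * ((n + k).choose k : ℝ) ≤ ((n + k : ℕ) : ℝ) ^ k := by
    have := Nat.descFactorial_le_pow (n + k) k
    rw [Nat.descFactorial_eq_factorial_mul_choose] at this
    exact_mod_cast this
  calc _ = k.factorial * ((n + k).choose k : ℝ) * Real.exp (-(((n + k : ℕ) + 1) * τ)) := by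
        rw [exp_pow_aux, exp_pow_aux, show -((((n + k : ℕ) : ℝ) + 1) * τ) = -((k + 1 : ℕ) * τ) + -(n * τ) by push_cast; ring, Real.exp_add]; ring
    _ ≤ _ := by
      gcongr
      refine h1.trans ?_
      gcongr
      linarith

lemma g_bdd (k : ℕ) : ∃ C : ℝ, ∀ τ : ℝ, 0 < τ →
    τ ^ (k + 1) * ∑' n : ℕ, ((n : ℝ) + 1) ^ k * Real.exp (-((n + 1) * τ)) ≤ C := by
  refine ⟨k.factorial * ((k + 1).factorial * Real.exp 1), fun τ hτ => ?_⟩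
  have hr : Real.exp (-τ) < 1 := Real.exp_lt_one_iff.2 (by linarith)
  have h1 : τ / (1 - Real.exp (-τ)) ≤ 1 + τ := by
    rw [div_le_iff₀ (by linarith)]
    have h2 : Real.exp (-τ) ≤ 1 / (1 + τ) := by
      rw [Real.exp_neg, ← one_div]
      apply one_div_le_one_div_of_le (by linarith)
      have := Real.add_one_le_exp τ; linarith
    rw [le_div_iff₀ (by linarith)] at h2
    nlinarith
  have h0 : 0 ≤ τ / (1 - Real.exp (-τ)) := div_nonneg hτ.le (by linarith)
  have h3 := Real.pow_div_factorial_le_exp (1 + τ) (by linarith) (k + 1)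
  rw [div_le_iff₀ (by positivity)] at h3
  calc _ ≤ τ ^ (k + 1) * (k.factorial * Real.exp (-τ) * (1 / (1 - Real.exp (-τ)) ^ (k + 1))) := by
        gcongr; exact g_upper k hτ
    _ = k.factorial * (Real.exp (-τ) * (τ / (1 - Real.exp (-τ))) ^ (k + 1)) := by
        rw [div_pow]; ring
    _ ≤ k.factorial * (Real.exp (-τ) * (Real.exp (1 + τ) * (k + 1).factorial)) := by
        gcongr
        exact (pow_le_pow_left₀ h0 h1 _).trans h3
    _ = _ := by
        have : Real.exp (-τ) * Real.exp (1 + τ) = Real.exp 1 := by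
          rw [← Real.exp_add]; congr 1; ring
        rw [← this]; ring

lemma tendsto_div_one_sub_exp :
    Tendsto (fun τ : ℝ => τ / (1 - Real.exp (-τ))) (𝓝[>] 0) (𝓝 1) := by
  have h : HasDerivAt (fun τ : ℝ => 1 - Real.exp (-τ)) 1 0 := by
    have := ((hasDerivAt_neg (0:ℝ)).exp).const_sub 1
    simpa using this
  have h2 := h.tendsto_slope_zero_right
  have h3 := h2.inv₀ one_ne_zero
  simp only [inv_one] at h3
  refine h3.congr fun τ => ?_
  simp [div_eq_mul_inv, mul_comm]

lemma g_tendsto (k : ℕ) : Tendsto (fun τ : ℝ =>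
    τ ^ (k + 1) * ∑' n : ℕ, ((n : ℝ) + 1) ^ k * Real.exp (-((n + 1) * τ))) (𝓝[>] 0) (𝓝 k.factorial) := by
  have he : Tendsto (fun τ : ℝ => Real.exp (-τ)) (𝓝[>] 0) (𝓝 1) := by
    have : Continuous (fun τ : ℝ => Real.exp (-τ)) := by fun_prop
    have := (this.tendsto 0).mono_left (nhdsWithin_le_nhds (s := Set.Ioi 0))
    simpa using this
  have hlo : Tendsto (fun τ : ℝ => (k.factorial : ℝ) * Real.exp (-τ) ^ (k + 1) * (τ / (1 - Real.exp (-τ))) ^ (k + 1)) (𝓝[>] 0) (𝓝 k.factorial) := by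
    simpa using ((he.pow (k+1)).const_mul (k.factorial : ℝ)).mul (tendsto_div_one_sub_exp.pow (k+1))
  have hup : Tendsto (fun τ : ℝ => (k.factorial : ℝ) * Real.exp (-τ) * (τ / (1 - Real.exp (-τ))) ^ (k + 1)) (𝓝[>] 0) (𝓝 k.factorial) := by
    simpa using (he.const_mul (k.factorial : ℝ)).mul (tendsto_div_one_sub_exp.pow (k+1))
  refine tendsto_of_tendsto_of_tendsto_of_le_of_le' hlo hup ?_ ?_
  · filter_upwards [self_mem_nhdsWithin] with τ hτ
    have hτ : 0 < τ := hτ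
    calc _ = τ ^ (k + 1) * (k.factorial * Real.exp (-τ) ^ (k + 1) * (1 / (1 - Real.exp (-τ)) ^ (k + 1))) := by
          rw [div_pow]; ring
      _ ≤ _ := by gcongr; exact g_lower k hτ
  · filter_upwards [self_mem_nhdsWithin] with τ hτ
    have hτ : 0 < τ := hτ
    calc _ ≤ τ ^ (k + 1) * (k.factorial * Real.exp (-τ) * (1 / (1 - Real.exp (-τ)) ^ (k + 1))) := by
          gcongr; exact g_upper k hτ
      _ = _ := by rw [div_pow]; ring

lemma hasSum_pi : ∀ (p : ℕ) (f : Fin p → ℕ+ → ℝ) (S : Fin p → ℝ), (∀ i d, 0 ≤ f i d) →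
    (∀ i, HasSum (f i) (S i)) → HasSum (fun δ : Fin p → ℕ+ => ∏ i, f i (δ i)) (∏ i, S i) := by
  intro p
  induction p with
  | zero => 
    intro f S _ _
    simp
  | succ p ih =>
    intro f S h0 hS
    have h1 := ih (fun i => f i.succ) (fun i => S i.succ) (fun i d => h0 _ d) (fun i => hS _)
    have e0 : (0 : ℕ+ → ℝ) ≤ f 0 := fun d => h0 0 d
    have e1 : (0 : (Fin p → ℕ+) → ℝ) ≤ fun δ : Fin p → ℕ+ => ∏ i, f i.succ (δ i) :=
      fun δ => Finset.prod_nonneg fun i _ => h0 i.succ (δ i)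
    have hs := (hS 0).summable.mul_of_nonneg h1.summable e0 e1
    have h2 := (hS 0).mul h1 hs
    rw [Fin.prod_univ_succ, ← (Fin.consEquiv (fun _ : Fin (p+1) => ℕ+)).hasSum_iff]
    have e : (fun δ : Fin (p+1) → ℕ+ => ∏ i, f i (δ i)) ∘ (Fin.consEquiv fun _ : Fin (p+1) => ℕ+) =
        fun x => f 0 x.1 * ∏ i, f i.succ (x.2 i) := by
      funext q
      simp [Fin.prod_univ_succ, Fin.consEquiv]
    rw [e]; exact h2

noncomputable section
def Dv {p : ℕ} (δ : Fin p → ℕ+) : ℝ := ∏ i, ((δ i : ℕ) : ℝ)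
def av (r : ℕ) (δ : Fin (r + 2) → ℕ+) : ℝ := ∏ i, ((δ i : ℕ) : ℝ) ^ ((r : ℤ) - (i : ℕ))
def TT (r k : ℕ) (t : ℝ) (δ : Fin (r + 2) → ℕ+) : ℝ := av r δ * Dv δ ^ k * Real.exp (-(Dv δ * t))
def Wv (r : ℕ) (δ : Fin (r + 1) → ℕ+) : ℝ := ∏ i, (((δ i : ℕ) : ℝ) ^ ((i : ℕ) + 2))⁻¹
def Zp (r : ℕ) : ℝ := ∏ i : Fin (r + 1), zetaR (((i : ℕ) + 2 : ℕ) : ℝ)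
def MM (r k : ℕ) (t : ℝ) : ℝ := ∑' δ, TT r k t δ
end

lemma pnat_pos (d : ℕ+) : (0 : ℝ) < ((d : ℕ) : ℝ) := by exact_mod_cast d.pos

lemma Dv_pos {p : ℕ} (δ : Fin p → ℕ+) : 0 < Dv δ := Finset.prod_pos fun _ _ => pnat_pos _

lemma one_le_Dv {p : ℕ} (δ : Fin p → ℕ+) : 1 ≤ Dv δ := by
  have h : (1 : ℝ) = ∏ i : Fin p, (1 : ℝ) := by simp
  rw [h]
  exact Finset.prod_le_prod (fun i _ => by norm_num) (fun i _ => by exact_mod_cast (δ i).pos)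

lemma av_pos (r : ℕ) (δ) : 0 < av r δ := Finset.prod_pos fun _ _ => zpow_pos (pnat_pos _) _

lemma TT_pos (r k : ℕ) (t : ℝ) (δ) : 0 < TT r k t δ :=
  mul_pos (mul_pos (av_pos _ _) (pow_pos (Dv_pos _) _)) (Real.exp_pos _)

lemma Wv_pos (r : ℕ) (δ) : 0 < Wv r δ :=
  Finset.prod_pos fun _ _ => inv_pos.2 (pow_pos (pnat_pos _) _)

lemma TT_cons (r k : ℕ) (t : ℝ) (d : ℕ+) (δ : Fin (r + 1) → ℕ+) :
    t ^ (r + k + 1) * TT r k t (Fin.cons d δ : Fin (r + 2) → ℕ+) =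
      Wv r δ * ((Dv δ * t) ^ (r + k + 1) *
        (((d : ℕ) : ℝ) ^ (r + k) * Real.exp (-(((d : ℕ) : ℝ) * (Dv δ * t))))) := by
  have hD : Dv (Fin.cons d δ : Fin (r + 2) → ℕ+) = d * Dv δ := by
    simp [Dv, Fin.prod_univ_succ]
  have hA : av r (Fin.cons d δ : Fin (r + 2) → ℕ+) = ((d : ℕ) : ℝ) ^ r * (Wv r δ * Dv δ ^ (r + 1)) := by
    rw [av, Fin.prod_univ_succ]
    congr 1
    · rw [Wv, Dv, ← Finset.prod_pow, ← Finset.prod_mul_distrib]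
      refine Finset.prod_congr rfl fun i _ => ?_
      have := pnat_pos (δ i)
      simp only [Fin.cons_succ, Fin.val_succ]
      rw [← zpow_natCast, ← zpow_natCast, ← zpow_neg, ← zpow_add₀ this.ne']
      congr 1
      push_cast
      ring
  rw [TT, hD, hA]
  rw [show -((d : ℝ) * Dv δ * t) = -((d : ℝ) * (Dv δ * t)) by ring]
  ring

lemma tsum_pnat_shift (f : ℕ → ℝ) : ∑' d : ℕ+, f d = ∑' n : ℕ, f (n + 1) := 
  tsum_pnat_eq_tsum_succ (f := f)

lemma summable_pnat_shift (f : ℕ → ℝ) : Summable (fun d : ℕ+ => f d) ↔ Summable (fun n : ℕ => f (n + 1)) := 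
  summable_pnat_iff_summable_succ (f := f)

lemma zetaR_nat (j : ℕ) : zetaR (j : ℝ) = ∑' d : ℕ+, (((d : ℕ) : ℝ) ^ j)⁻¹ := by
  rw [tsum_pnat_shift (fun n => ((n : ℝ) ^ j)⁻¹), zetaR]
  refine tsum_congr fun m => ?_
  rw [Real.rpow_natCast, one_div]
  push_cast; rfl

lemma hasSum_zeta (j : ℕ) (hj : 2 ≤ j) : HasSum (fun d : ℕ+ => (((d : ℕ) : ℝ) ^ j)⁻¹) (zetaR (j : ℝ)) := by
  rw [zetaR_nat]
  apply Summable.hasSum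
  rw [summable_pnat_shift (fun n => ((n : ℝ) ^ j)⁻¹)]
  exact (summable_nat_add_iff 1).2 (Real.summable_nat_pow_inv.2 (by omega))

lemma zetaR_pos (j : ℕ) (hj : 2 ≤ j) : 0 < zetaR (j : ℝ) := by
  have h := hasSum_zeta j hj
  rw [← h.tsum_eq]
  exact h.summable.tsum_pos (fun d => by positivity) 1 (by simp)

lemma hasSum_W (r : ℕ) : HasSum (Wv r) (Zp r) :=
  hasSum_pi (r + 1) (fun i d => (((d : ℕ) : ℝ) ^ ((i : ℕ) + 2))⁻¹) _ (fun i d => by positivity)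
    (fun i => hasSum_zeta _ (by omega))

lemma Zp_pos (r : ℕ) : 0 < Zp r := Finset.prod_pos fun i _ => zetaR_pos _ (by omega)

lemma Kconst_eq (r : ℕ) : Kconst (r + 2) = ((r + 1).factorial : ℝ) * Zp r := by
  rw [Kconst, Zp, Fin.prod_univ_eq_prod_range (fun i => zetaR (((i + 2 : ℕ) : ℕ) : ℝ))]
  congr 1
  rw [Finset.range_eq_Ico, Finset.prod_Ico_add' (fun i : ℕ => zetaR (i : ℝ)) 0 (r + 1) 2]
  congr 1

lemma summable_d (k : ℕ) {τ : ℝ} (hτ : 0 < τ) :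
    Summable (fun d : ℕ+ => ((d : ℕ) : ℝ) ^ k * Real.exp (-(((d : ℕ) : ℝ) * τ))) := by
  rw [summable_pnat_shift (fun n => (n : ℝ) ^ k * Real.exp (-((n : ℝ) * τ)))]
  exact (summable_g k hτ).congr fun n => by push_cast; rfl

lemma tsum_d (k : ℕ) (τ : ℝ) :
    ∑' d : ℕ+, ((d : ℕ) : ℝ) ^ k * Real.exp (-(((d : ℕ) : ℝ) * τ)) =
      ∑' n : ℕ, ((n : ℝ) + 1) ^ k * Real.exp (-((n + 1) * τ)) := by
  rw [tsum_pnat_shift (fun n => (n : ℝ) ^ k * Real.exp (-((n : ℝ) * τ)))]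
  exact tsum_congr fun n => by push_cast; rfl

noncomputable def GG (k : ℕ) (τ : ℝ) : ℝ := τ ^ (k + 1) * ∑' d : ℕ+, ((d : ℕ) : ℝ) ^ k * Real.exp (-(((d : ℕ) : ℝ) * τ))

lemma GG_nonneg (k : ℕ) {τ : ℝ} (hτ : 0 < τ) : 0 ≤ GG k τ :=
  mul_nonneg (by positivity) (tsum_nonneg fun d => by positivity)

lemma GG_bdd (k : ℕ) : ∃ C : ℝ, ∀ τ : ℝ, 0 < τ → GG k τ ≤ C := by
  obtain ⟨C, hC⟩ := g_bdd k
  exact ⟨C, fun τ hτ => by rw [GG, tsum_d]; exact hC τ hτ⟩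

lemma GG_tendsto (k : ℕ) : Tendsto (GG k) (𝓝[>] 0) (𝓝 k.factorial) := by
  refine (g_tendsto k).congr fun τ => ?_
  rw [GG, tsum_d]

lemma summable_W_GG (r k : ℕ) {t : ℝ} (ht : 0 < t) :
    Summable (fun δ : Fin (r + 1) → ℕ+ => Wv r δ * GG k (Dv δ * t)) := by
  obtain ⟨C, hC⟩ := GG_bdd k
  refine Summable.of_nonneg_of_le (fun δ => ?_) (fun δ => ?_) ((hasSum_W r).summable.mul_right C)
  · exact mul_nonneg (Wv_pos _ _).le (GG_nonneg k (mul_pos (Dv_pos _) ht))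
  · exact mul_le_mul_of_nonneg_left (hC _ (mul_pos (Dv_pos _) ht)) (Wv_pos _ _).le

noncomputable def FF (r k : ℕ) (t : ℝ) (q : (Fin (r + 1) → ℕ+) × ℕ+) : ℝ :=
  Wv r q.1 * ((Dv q.1 * t) ^ (r + k + 1) *
        (((q.2 : ℕ) : ℝ) ^ (r + k) * Real.exp (-(((q.2 : ℕ) : ℝ) * (Dv q.1 * t)))))

def eqv (r : ℕ) : (Fin (r + 1) → ℕ+) × ℕ+ ≃ (Fin (r + 2) → ℕ+) :=
    (Equiv.prodComm _ _).trans (Fin.consEquiv (fun _ : Fin (r + 2) => ℕ+))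

lemma eqv_apply (r : ℕ) (q) : eqv r q = (Fin.cons q.2 q.1 : Fin (r + 2) → ℕ+) := rfl

lemma FF_nonneg (r k : ℕ) {t : ℝ} (ht : 0 < t) (q) : 0 ≤ FF r k t q := by
  have := (Wv_pos r q.1).le
  have := Dv_pos q.1
  unfold FF
  positivity

lemma FF_tsum (r k : ℕ) (t : ℝ) (δ) : ∑' d, FF r k t (δ, d) = Wv r δ * GG (r + k) (Dv δ * t) := by
  simp only [FF]
  rw [tsum_mul_left, tsum_mul_left, GG]

lemma FF_summable (r k : ℕ) {t : ℝ} (ht : 0 < t) : Summable (FF r k t) := by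
  rw [summable_prod_of_nonneg (FF_nonneg r k ht)]
  constructor
  · intro δ
    simp only [FF]
    exact ((summable_d (r + k) (mul_pos (Dv_pos δ) ht)).mul_left ((Dv δ * t) ^ (r + k + 1))).mul_left (Wv r δ)
  simp_rw [FF_tsum]
  exact summable_W_GG r (r + k) ht

lemma TT_eqv (r k : ℕ) (t : ℝ) (q) : t ^ (r + k + 1) * TT r k t (eqv r q) = FF r k t q := by
  rw [eqv_apply, TT_cons]; rfl

lemma summable_TT (r k : ℕ) {t : ℝ} (ht : 0 < t) : Summable (TT r k t) := by
  have hS : Summable (fun δ => t ^ (r + k + 1) * TT r k t δ) := by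
    rw [← (eqv r).summable_iff]
    exact (FF_summable r k ht).congr fun q => (TT_eqv r k t q).symm
  exact (summable_mul_left_iff (by positivity)).1 hS

lemma MM_eq (r k : ℕ) {t : ℝ} (ht : 0 < t) :
    t ^ (r + k + 1) * MM r k t = ∑' δ : Fin (r + 1) → ℕ+, Wv r δ * GG (r + k) (Dv δ * t) := by
  rw [MM, ← tsum_mul_left, ← (eqv r).tsum_eq]
  simp_rw [TT_eqv]
  rw [(FF_summable r k ht).tsum_prod]
  exact tsum_congr (FF_tsum r k t)

lemma MM_tendsto (r k : ℕ) : Tendsto (fun t => t ^ (r + k + 1) * MM r k t) (𝓝[>] 0)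
    (𝓝 ((r + k).factorial * Zp r)) := by
  obtain ⟨C, hC⟩ := GG_bdd (r + k)
  have h : Tendsto (fun t : ℝ => ∑' δ : Fin (r + 1) → ℕ+, Wv r δ * GG (r + k) (Dv δ * t)) (𝓝[>] 0)
      (𝓝 (∑' δ : Fin (r + 1) → ℕ+, Wv r δ * (r + k).factorial)) := by
    refine tendsto_tsum_of_dominated_convergence ((hasSum_W r).summable.mul_right C) ?_ ?_
    · intro δ
      refine Tendsto.const_mul _ ((GG_tendsto (r + k)).comp ?_)
      refine tendsto_nhdsWithin_iff.2 ⟨?_, ?_⟩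
      · have : Continuous (fun t : ℝ => Dv δ * t) := by fun_prop
        simpa using (this.tendsto 0).mono_left nhdsWithin_le_nhds
      · filter_upwards [self_mem_nhdsWithin] with t ht
        exact mul_pos (Dv_pos _) ht
    · filter_upwards [self_mem_nhdsWithin] with t ht δ
      have hp := mul_pos (Dv_pos δ) ht
      rw [Real.norm_of_nonneg (mul_nonneg (Wv_pos _ _).le (GG_nonneg _ hp))]
      exact mul_le_mul_of_nonneg_left (hC _ hp) (Wv_pos _ _).le
  rw [tsum_mul_right, (hasSum_W r).tsum_eq, mul_comm] at h
  refine h.congr' ?_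
  filter_upwards [self_mem_nhdsWithin] with t ht
  exact (MM_eq r k ht).symm

lemma MM_antitone (r k : ℕ) {u t : ℝ} (hu : 0 < u) (hut : u ≤ t) : MM r k t ≤ MM r k u := by
  refine (summable_TT r k (hu.trans_le hut)).tsum_le_tsum (fun δ => ?_) (summable_TT r k hu)
  have := av_pos r δ
  have := Dv_pos δ
  unfold TT
  gcongr

lemma MM_continuousOn (r k : ℕ) : ContinuousOn (MM r k) (Set.Ioi 0) := by
  intro t ht
  have ht : 0 < t := ht
  have h : ContinuousOn (MM r k) (Set.Ioi (t / 2)) := by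
    refine continuousOn_tsum (u := TT r k (t / 2)) (fun δ => ?_) (summable_TT r k (by linarith)) ?_
    · unfold TT; fun_prop
    · intro δ s hs
      have hs : t / 2 < s := hs
      rw [Real.norm_of_nonneg (TT_pos _ _ _ _).le]
      have := av_pos r δ
      have := Dv_pos δ
      unfold TT
      gcongr
  exact (h.continuousAt (Ioi_mem_nhds (by linarith))).continuousWithinAt

lemma trig_pos (N : ℕ) (hN : 1 ≤ N) {θ : ℝ} (h0 : 0 ≤ θ) (hθ : θ ≤ π) :
    2 * (N : ℝ) ^ 3 * θ ^ 2 / π ^ 2 ≤ ∑ n ∈ Finset.Ico N (4 * N), (1 - Real.cos (((n + 1 : ℕ) : ℝ) * θ)) ∨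
    (N : ℝ) / 4 ≤ ∑ n ∈ Finset.Ico N (4 * N), (1 - Real.cos (((n + 1 : ℕ) : ℝ) * θ)) := by
  have hNr : (1 : ℝ) ≤ N := by exact_mod_cast hN
  have hpi := Real.pi_pos
  have hnn : ∀ u : ℝ, 0 ≤ 1 - Real.cos u := fun u => by linarith [Real.cos_le_one u]
  have hsq : ∀ u : ℝ, 1 - Real.cos u = 2 * Real.sin (u / 2) ^ 2 := fun u => by
    have h1 := Real.cos_two_mul (u / 2)
    have h2 := Real.sin_sq_add_cos_sq (u / 2)
    rw [show 2 * (u / 2) = u by ring] at h1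
    linarith
  rcases le_or_gt θ (π / (2 * N)) with h | h
  · left
    have hsub : Finset.Ico N (2 * N) ⊆ Finset.Ico N (4 * N) := Finset.Ico_subset_Ico le_rfl (by omega)
    refine le_trans ?_ (Finset.sum_le_sum_of_subset_of_nonneg hsub fun _ _ _ => hnn _)
    have hc : 2 * (N : ℝ) ^ 3 * θ ^ 2 / π ^ 2 = ∑ n ∈ Finset.Ico N (2 * N), 2 * (N * θ / π) ^ 2 := by
      rw [Finset.sum_const, Nat.card_Ico, nsmul_eq_mul, show 2 * N - N = N by omega]
      field_simp
    rw [hc]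
    refine Finset.sum_le_sum fun n hn => ?_
    rw [Finset.mem_Ico] at hn
    have hn1 : (N : ℝ) ≤ ((n + 1 : ℕ) : ℝ) := by exact_mod_cast (by omega)
    have hn2 : ((n + 1 : ℕ) : ℝ) ≤ 2 * N := by exact_mod_cast (by omega)
    rw [hsq]
    have hle : ((n + 1 : ℕ) : ℝ) * θ / 2 ≤ π / 2 := by
      rw [le_div_iff₀ (by positivity)] at h
      nlinarith
    have hs := Real.mul_le_sin (by positivity) hle
    have : N * θ / π ≤ Real.sin (((n + 1 : ℕ) : ℝ) * θ / 2) := by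
      refine le_trans ?_ hs
      calc N * θ / π ≤ ((n + 1 : ℕ) : ℝ) * θ / π := by gcongr
        _ = _ := by ring
    gcongr
  · right
    have hθ0 : 0 < θ := lt_of_le_of_lt (by positivity) h
    set m := ⌊π / θ⌋₊ with hm
    have hm1 : 1 ≤ m := by
      rw [hm, Nat.one_le_floor_iff, le_div_iff₀ hθ0]; linarith
    have hmle : (m : ℝ) ≤ π / θ := Nat.floor_le (by positivity)
    have hmlt : π / θ < m + 1 := Nat.lt_floor_add_one _
    have hm2 : m ≤ 2 * N := by
      have : (m : ℝ) ≤ 2 * N := by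
        refine hmle.trans ?_
        rw [div_lt_iff₀ (by positivity)] at h
        rw [div_le_iff₀ hθ0]; linarith
      exact_mod_cast this
    rw [le_div_iff₀ hθ0] at hmle
    rw [div_lt_iff₀ hθ0] at hmlt
    have hm1r : (1 : ℝ) ≤ m := by exact_mod_cast hm1
    have hcos : Real.cos (m * θ) ≤ 0 := by
      apply Real.cos_nonpos_of_pi_div_two_le_of_le
      · nlinarith
      · linarith
    have hpair : ∀ d : ℝ, 1 / 2 ≤ (1 - Real.cos (d * θ)) + (1 - Real.cos ((d + m) * θ)) := by
      intro d
      rw [hsq, hsq]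
      have h3 := hsq (m * θ)
      have h4 : Real.sin (m * θ / 2) = Real.sin ((d + m) * θ / 2) * Real.cos (d * θ / 2) - Real.cos ((d + m) * θ / 2) * Real.sin (d * θ / 2) := by
        rw [← Real.sin_sub]; congr 1; ring
      rw [h4] at h3
      have h5 := Real.sin_sq_add_cos_sq (d * θ / 2)
      have h6 := Real.sin_sq_add_cos_sq ((d + m) * θ / 2)
      generalize Real.sin ((d + m) * θ / 2) = A at *
      generalize Real.cos ((d + m) * θ / 2) = B at *
      generalize Real.sin (d * θ / 2) = E at *
      generalize Real.cos (d * θ / 2) = F at *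
      have h7 : (A * F - B * E) ^ 2 ≤ 2 * (A ^ 2 + E ^ 2) := by
        have : (A * F - B * E) ^ 2 ≤ 2 * ((A * F) ^ 2 + (B * E) ^ 2) := by
          nlinarith [sq_nonneg (A * F + B * E)]
        have e1 : (A * F) ^ 2 ≤ A ^ 2 := by nlinarith [sq_nonneg (A * E), sq_nonneg A]
        have e2 : (B * E) ^ 2 ≤ E ^ 2 := by nlinarith [sq_nonneg (A * E), sq_nonneg E]
        linarith
      linarith
    have hs1 : ∑ n ∈ Finset.Ico N (2 * N), (1 - Real.cos (((n + 1 : ℕ) : ℝ) * θ)) ≤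
        ∑ n ∈ Finset.Ico N (4 * N), (1 - Real.cos (((n + 1 : ℕ) : ℝ) * θ)) :=
      Finset.sum_le_sum_of_subset_of_nonneg (Finset.Ico_subset_Ico le_rfl (by omega)) fun _ _ _ => hnn _
    have hs2 : ∑ n ∈ Finset.Ico N (2 * N), (1 - Real.cos (((n + m + 1 : ℕ) : ℝ) * θ)) ≤
        ∑ n ∈ Finset.Ico N (4 * N), (1 - Real.cos (((n + 1 : ℕ) : ℝ) * θ)) := by
      rw [Finset.sum_Ico_add' (fun n : ℕ => 1 - Real.cos (((n + 1 : ℕ) : ℝ) * θ)) N (2 * N) m]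
      exact Finset.sum_le_sum_of_subset_of_nonneg (Finset.Ico_subset_Ico (by omega) (by omega)) fun _ _ _ => hnn _
    have hs3 : (N : ℝ) / 2 ≤ ∑ n ∈ Finset.Ico N (2 * N), ((1 - Real.cos (((n + 1 : ℕ) : ℝ) * θ)) + (1 - Real.cos (((n + m + 1 : ℕ) : ℝ) * θ))) := by
      have hc : (N : ℝ) / 2 = ∑ n ∈ Finset.Ico N (2 * N), (1 / 2 : ℝ) := by
        rw [Finset.sum_const, Nat.card_Ico, nsmul_eq_mul, show 2 * N - N = N by omega]; ring
      rw [hc]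
      refine Finset.sum_le_sum fun n _ => ?_
      have := hpair ((n + 1 : ℕ) : ℝ)
      rw [show ((n + m + 1 : ℕ) : ℝ) = ((n + 1 : ℕ) : ℝ) + m by push_cast; ring]
      exact this
    rw [Finset.sum_add_distrib] at hs3
    linarith

lemma trig (N : ℕ) (hN : 1 ≤ N) {θ : ℝ} (hθ : |θ| ≤ π) :
    2 * (N : ℝ) ^ 3 * θ ^ 2 / π ^ 2 ≤ ∑ n ∈ Finset.Ico N (4 * N), (1 - Real.cos (((n + 1 : ℕ) : ℝ) * θ)) ∨
    (N : ℝ) / 4 ≤ ∑ n ∈ Finset.Ico N (4 * N), (1 - Real.cos (((n + 1 : ℕ) : ℝ) * θ)) := by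
  have h := trig_pos N hN (abs_nonneg θ) hθ
  have e : ∀ d : ℝ, 0 ≤ d → Real.cos (d * |θ|) = Real.cos (d * θ) := fun d hd => by
    rw [← abs_of_nonneg hd, ← abs_mul, Real.cos_abs, abs_of_nonneg hd]
  rw [sq_abs] at h
  simp_rw [e _ (Nat.cast_nonneg _)] at h
  exact h

lemma exp_taylor (u : ℝ) : ‖Complex.exp (Complex.I * u) - 1 - Complex.I * u + (u : ℂ) ^ 2 / 2‖ ≤ 4 * |u| ^ 3 := by
  have hI : ‖Complex.I * (u : ℂ)‖ = |u| := by simp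
  rcases le_or_gt |u| 1 with h | h
  · have := Complex.exp_bound (x := Complex.I * u) (by rw [hI]; exact h) (n := 3) (by norm_num)
    rw [hI] at this
    have e : Complex.exp (Complex.I * u) - 1 - Complex.I * u + (u : ℂ) ^ 2 / 2 =
      Complex.exp (Complex.I * u) - ∑ m ∈ Finset.range 3, (Complex.I * (u : ℂ)) ^ m / (m.factorial : ℂ) := by
      simp [Finset.sum_range_succ, mul_pow]; ring
    rw [e]
    refine this.trans ?_
    rw [mul_comm]
    have : (0:ℝ) ≤ |u| ^ 3 := by positivity
    gcongr
    norm_num [Nat.factorial]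
  · have h1 : ‖Complex.exp (Complex.I * u)‖ = 1 := by rw [mul_comm]; exact Complex.norm_exp_ofReal_mul_I u
    have h2 : ‖(u : ℂ) ^ 2 / 2‖ = |u| ^ 2 / 2 := by simp
    calc _ ≤ ‖Complex.exp (Complex.I * u)‖ + ‖(1:ℂ)‖ + ‖Complex.I * (u:ℂ)‖ + ‖(u : ℂ) ^ 2 / 2‖ :=
        (norm_add_le _ _).trans (by gcongr; exact (norm_sub_le _ _).trans (by gcongr; exact norm_sub_le _ _))
      _ = 1 + 1 + |u| + |u| ^ 2 / 2 := by rw [h1, h2, hI, norm_one]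
      _ ≤ _ := by
        have a1 : |u| ≤ |u| ^ 2 := by nlinarith
        have a2 : |u| ^ 2 ≤ |u| ^ 3 := by nlinarith [sq_nonneg |u|]
        nlinarith

lemma TT_single (r : ℕ) (t : ℝ) (d : ℕ+) :
    TT r 0 t (Fin.cons d (fun _ => 1) : Fin (r + 2) → ℕ+) = ((d : ℕ) : ℝ) ^ r * Real.exp (-((d : ℕ) * t)) ∧
    Dv (Fin.cons d (fun _ => 1) : Fin (r + 2) → ℕ+) = (d : ℕ) := by
  have hD : Dv (Fin.cons d (fun _ => 1) : Fin (r + 2) → ℕ+) = (d : ℕ) := by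
    simp [Dv, Fin.prod_univ_succ]
  refine ⟨?_, hD⟩
  rw [TT, hD, av, Fin.prod_univ_succ]
  simp

noncomputable def SS (r : ℕ) (t θ : ℝ) : ℝ := ∑' δ, TT r 0 t δ * (1 - Real.cos (Dv δ * θ))

lemma summable_SS (r : ℕ) {t : ℝ} (ht : 0 < t) (θ : ℝ) : Summable (fun δ => TT r 0 t δ * (1 - Real.cos (Dv δ * θ))) := by
  refine Summable.of_nonneg_of_le (fun δ => ?_) (fun δ => ?_) ((summable_TT r 0 ht).mul_right 2)
  · exact mul_nonneg (TT_pos _ _ _ _).le (by linarith [Real.cos_le_one (Dv δ * θ)])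
  · exact mul_le_mul_of_nonneg_left (by linarith [Real.neg_one_le_cos (Dv δ * θ)]) (TT_pos _ _ _ _).le

lemma SS_lower (r : ℕ) : ∃ c : ℝ, 0 < c ∧ ∀ t θ : ℝ, 0 < t → t ≤ 1 → |θ| ≤ π →
    (c * (θ ^ 2 / t ^ (r + 3)) ≤ SS r t θ ∨ c * (1 / t) ^ (r + 1) ≤ SS r t θ) := by
  refine ⟨Real.exp (-8) / 8, by positivity, fun t θ ht ht1 hθ => ?_⟩
  set N := ⌈1 / t⌉₊ with hN
  have hNge : 1 / t ≤ N := Nat.le_ceil _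
  have hNlt : (N : ℝ) < 1 / t + 1 := Nat.ceil_lt_add_one (by positivity)
  have h1t : 1 ≤ 1 / t := by rw [le_div_iff₀ ht]; linarith
  have hN1 : 1 ≤ N := by
    have : (1 : ℝ) ≤ N := h1t.trans hNge
    exact_mod_cast this
  have hNt : (N : ℝ) * t ≤ 2 := by
    have : (N : ℝ) * t ≤ (2 * (1 / t)) * t := by gcongr; linarith
    rwa [mul_assoc, one_div, inv_mul_cancel₀ ht.ne', mul_one] at this
  have hnn : ∀ u : ℝ, 0 ≤ 1 - Real.cos u := fun u => by linarith [Real.cos_le_one u]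
  let e : ℕ ↪ (Fin (r + 2) → ℕ+) := ⟨fun n => Fin.cons (Nat.succPNat n) (fun _ => 1), fun a b hab => by
    have := congrFun hab 0
    simpa using this⟩
  have h1 : ∑ δ ∈ (Finset.Ico N (4 * N)).map e, TT r 0 t δ * (1 - Real.cos (Dv δ * θ)) ≤ SS r t θ :=
    (summable_SS r ht θ).sum_le_tsum _ fun δ _ => mul_nonneg (TT_pos _ _ _ _).le (hnn _)
  rw [Finset.sum_map] at h1
  have h2 : (N : ℝ) ^ r * Real.exp (-8) * ∑ n ∈ Finset.Ico N (4 * N), (1 - Real.cos (((n + 1 : ℕ) : ℝ) * θ)) ≤ SS r t θ := by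
    refine le_trans ?_ h1
    rw [Finset.mul_sum]
    refine Finset.sum_le_sum fun n hn => ?_
    rw [Finset.mem_Ico] at hn
    obtain ⟨e1, e2⟩ := TT_single r t (Nat.succPNat n)
    have : e n = (Fin.cons (Nat.succPNat n) (fun _ => 1) : Fin (r + 2) → ℕ+) := rfl
    rw [this, e1, e2, Nat.succPNat_coe, Nat.succ_eq_add_one]
    have hn1 : (N : ℝ) ≤ ((n + 1 : ℕ) : ℝ) := by exact_mod_cast (by omega)
    have hn2 : ((n + 1 : ℕ) : ℝ) ≤ 4 * N := by exact_mod_cast (by omega)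
    have := hnn (((n + 1 : ℕ) : ℝ) * θ)
    gcongr
    nlinarith
  have hpi := Real.pi_pos
  have hpi4 := Real.pi_le_four
  rcases trig N hN1 hθ with h | h
  · left
    refine le_trans ?_ h2
    calc Real.exp (-8) / 8 * (θ ^ 2 / t ^ (r + 3)) = Real.exp (-8) * (1 / 8) * θ ^ 2 * (1 / t) ^ (r + 3) := by
          rw [div_pow]; ring
      _ ≤ Real.exp (-8) * (2 / π ^ 2) * θ ^ 2 * N ^ (r + 3) := by
          gcongr ?_ * ?_ * _ * ?_ ^ _
          rw [div_le_div_iff₀ (by norm_num) (by positivity)]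
          nlinarith
      _ = N ^ r * Real.exp (-8) * (2 * (N : ℝ) ^ 3 * θ ^ 2 / π ^ 2) := by ring
      _ ≤ _ := by gcongr
  · right
    refine le_trans ?_ h2
    calc Real.exp (-8) / 8 * (1 / t) ^ (r + 1) ≤ Real.exp (-8) / 4 * N ^ (r + 1) := by
          gcongr; norm_num
      _ = N ^ r * Real.exp (-8) * (N / 4) := by ring
      _ ≤ _ := by gcongr

lemma Zstair_eq (r : ℕ) (t : ℝ) : Zstair (r + 2) ((r + 2 : ℕ) : ℤ) t = MM r 1 t := by
  rw [Zstair, Zr, MM]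
  refine tsum_congr fun δ => ?_
  rw [TT, pow_one, av, Dv, ← Finset.prod_mul_distrib, neg_mul]
  congr 1
  refine Finset.prod_congr rfl fun i _ => ?_
  have h := pnat_pos (δ i)
  rw [← zpow_add_one₀ h.ne', ← Real.rpow_intCast]
  congr 1
  push_cast; ring

lemma qfun_eq (r n : ℕ) (y t θ : ℝ) : qfun (r + 2) n y t θ = Complex.I * n * θ -
    y * ∑' δ, ((TT r 0 t δ : ℝ) : ℂ) * (Complex.exp (Complex.I * ((Dv δ * θ : ℝ) : ℂ)) - 1) := by
  rw [qfun]
  congr 2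
  refine tsum_congr fun δ => ?_
  congr 1
  rw [TT, pow_zero, mul_one, av, Dv]
  push_cast
  congr 1
  refine Finset.prod_congr rfl fun i _ => ?_
  congr 1
  ring

lemma norm_expI_sub_one (u : ℝ) : ‖Complex.exp (Complex.I * (u : ℂ)) - 1‖ ≤ 2 := by
  refine (norm_sub_le _ _).trans ?_
  rw [mul_comm, Complex.norm_exp_ofReal_mul_I, norm_one]; norm_num

lemma norm_term_le (r : ℕ) (t : ℝ) (δ) (u : ℝ) :
    ‖((TT r 0 t δ : ℝ) : ℂ) * (Complex.exp (Complex.I * (u : ℂ)) - 1)‖ ≤ TT r 0 t δ * 2 := by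
  rw [norm_mul, Complex.norm_real, Real.norm_of_nonneg (TT_pos _ _ _ _).le]
  exact mul_le_mul_of_nonneg_left (norm_expI_sub_one _) (TT_pos _ _ _ _).le

lemma summable_q (r : ℕ) {t : ℝ} (ht : 0 < t) (θ : ℝ) :
    Summable (fun δ => ((TT r 0 t δ : ℝ) : ℂ) * (Complex.exp (Complex.I * ((Dv δ * θ : ℝ) : ℂ)) - 1)) :=
  Summable.of_norm_bounded ((summable_TT r 0 ht).mul_right 2) fun δ => norm_term_le r t δ _

lemma q_continuous (r n : ℕ) (y : ℝ) {t : ℝ} (ht : 0 < t) : Continuous (fun θ => qfun (r + 2) n y t θ) := by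
  simp_rw [qfun_eq]
  refine Continuous.sub (by fun_prop) (continuous_const.mul ?_)
  refine continuous_tsum (fun δ => ?_) ((summable_TT r 0 ht).mul_right 2) (fun δ θ => norm_term_le r t δ _)
  fun_prop

lemma q_re (r n : ℕ) (y : ℝ) {t : ℝ} (ht : 0 < t) (θ : ℝ) : (-qfun (r + 2) n y t θ).re = -(y * SS r t θ) := by
  rw [qfun_eq, Complex.neg_re, Complex.sub_re, Complex.re_ofReal_mul, Complex.re_tsum (summable_q r ht θ)]
  have h1 : (Complex.I * n * θ).re = 0 := by simp
  have h2 : ∀ δ, (((TT r 0 t δ : ℝ) : ℂ) * (Complex.exp (Complex.I * ((Dv δ * θ : ℝ) : ℂ)) - 1)).re =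
      -(TT r 0 t δ * (1 - Real.cos (Dv δ * θ))) := fun δ => by
    rw [Complex.re_ofReal_mul, Complex.sub_re, mul_comm Complex.I, Complex.exp_ofReal_mul_I_re, Complex.one_re]
    ring
  simp_rw [h1, h2]
  rw [tsum_neg, SS]
  ring

lemma TT_k (r k : ℕ) (t : ℝ) (δ) : TT r k t δ = TT r 0 t δ * Dv δ ^ k := by
  simp [TT]; ring

lemma q_taylor (r n : ℕ) (y : ℝ) {t : ℝ} (ht : 0 < t) (θ : ℝ) :
    ‖-qfun (r + 2) n y t θ - (Complex.I * ((y * MM r 1 t - n : ℝ) : ℂ) * θ - ((y * MM r 2 t : ℝ) : ℂ) * θ ^ 2 / 2)‖ ≤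
      |y| * (4 * |θ| ^ 3 * MM r 3 t) := by
  have h0 := (summable_q r ht θ).hasSum
  have h1 : HasSum (fun δ => ((TT r 1 t δ : ℝ) : ℂ)) ((MM r 1 t : ℝ) : ℂ) :=
    Complex.hasSum_ofReal.2 (summable_TT r 1 ht).hasSum
  have h2 : HasSum (fun δ => ((TT r 2 t δ : ℝ) : ℂ)) ((MM r 2 t : ℝ) : ℂ) :=
    Complex.hasSum_ofReal.2 (summable_TT r 2 ht).hasSum
  have h3 := (summable_TT r 3 ht).hasSum.mul_left (4 * |θ| ^ 3)
  have h4 := (h0.sub (h1.mul_left (Complex.I * θ))).add (h2.mul_left ((θ : ℂ) ^ 2 / 2))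
  have hb : ∀ δ, ‖((TT r 0 t δ : ℝ) : ℂ) * (Complex.exp (Complex.I * ((Dv δ * θ : ℝ) : ℂ)) - 1) -
      Complex.I * θ * ((TT r 1 t δ : ℝ) : ℂ) + (θ : ℂ) ^ 2 / 2 * ((TT r 2 t δ : ℝ) : ℂ)‖ ≤
      4 * |θ| ^ 3 * TT r 3 t δ := by
    intro δ
    have e : ((TT r 0 t δ : ℝ) : ℂ) * (Complex.exp (Complex.I * ((Dv δ * θ : ℝ) : ℂ)) - 1) -
      Complex.I * θ * ((TT r 1 t δ : ℝ) : ℂ) + (θ : ℂ) ^ 2 / 2 * ((TT r 2 t δ : ℝ) : ℂ) =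
      ((TT r 0 t δ : ℝ) : ℂ) * (Complex.exp (Complex.I * ((Dv δ * θ : ℝ) : ℂ)) - 1 -
        Complex.I * ((Dv δ * θ : ℝ) : ℂ) + ((Dv δ * θ : ℝ) : ℂ) ^ 2 / 2) := by
      rw [TT_k r 1, TT_k r 2]; push_cast; ring
    rw [e, norm_mul, Complex.norm_real, Real.norm_of_nonneg (TT_pos _ _ _ _).le, TT_k r 3]
    calc _ ≤ TT r 0 t δ * (4 * |Dv δ * θ| ^ 3) :=
          mul_le_mul_of_nonneg_left (exp_taylor _) (TT_pos _ _ _ _).le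
      _ = _ := by rw [abs_mul, abs_of_pos (Dv_pos δ)]; ring
  have h5 := tsum_of_norm_bounded h3 hb
  rw [h4.tsum_eq] at h5
  have e : -qfun (r + 2) n y t θ - (Complex.I * ((y * MM r 1 t - n : ℝ) : ℂ) * θ - ((y * MM r 2 t : ℝ) : ℂ) * θ ^ 2 / 2) =
     (y : ℂ) * ((∑' δ, ((TT r 0 t δ : ℝ) : ℂ) * (Complex.exp (Complex.I * ((Dv δ * θ : ℝ) : ℂ)) - 1)) -
       Complex.I * θ * ((MM r 1 t : ℝ) : ℂ) + (θ : ℂ) ^ 2 / 2 * ((MM r 2 t : ℝ) : ℂ)) := by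
    rw [qfun_eq]; push_cast; ring
  rw [e, norm_mul, Complex.norm_real, Real.norm_eq_abs]
  exact mul_le_mul_of_nonneg_left h5 (abs_nonneg _)

lemma tseq_spec (r : ℕ) {x : ℝ} (hx : 0 < x) : ∀ᶠ n : ℕ in atTop,
    0 < tseq (r + 2) x n ∧ MM r 1 (tseq (r + 2) x n) = n / x := by
  have hlim : Tendsto (fun n : ℕ => (n : ℝ) / x) atTop atTop :=
    tendsto_natCast_atTop_atTop.atTop_div_const hx
  have hMM : Tendsto (MM r 1) (𝓝[>] 0) atTop := by
    have h1 := MM_tendsto r 1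
    have h2 : Tendsto (fun t : ℝ => (t ^ (r + 1 + 1))⁻¹) (𝓝[>] 0) atTop := by
      refine Tendsto.comp tendsto_inv_nhdsGT_zero ?_
      refine tendsto_nhdsWithin_iff.2 ⟨?_, ?_⟩
      · have : Continuous (fun t : ℝ => t ^ (r + 1 + 1)) := by fun_prop
        simpa using (this.tendsto 0).mono_left nhdsWithin_le_nhds
      · filter_upwards [self_mem_nhdsWithin] with t ht
        exact pow_pos (Set.mem_Ioi.1 ht) _
    have h3 := h2.atTop_mul_pos (by have := Zp_pos r; positivity) h1
    refine h3.congr' ?_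
    filter_upwards [self_mem_nhdsWithin] with t ht
    have : t ^ (r + 1 + 1) ≠ 0 := (pow_pos ht _).ne'
    field_simp
  filter_upwards [hlim.eventually_ge_atTop (MM r 1 1)] with n hn
  have hex : ∃ a ∈ Set.Ioi (0:ℝ), Zstair (r + 2) ((r + 2 : ℕ) : ℤ) a = n / x := by
    obtain ⟨u, hu1, hu2⟩ := ((hMM.eventually_ge_atTop ((n : ℝ) / x)).and
      (Ioo_mem_nhdsGT (show (0:ℝ) < 1 by norm_num))).exists
    have hc : ContinuousOn (MM r 1) (Set.Icc u 1) := (MM_continuousOn r 1).mono fun z hz => lt_of_lt_of_le hu2.1 hz.1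
    obtain ⟨z, hz, hz2⟩ := intermediate_value_Icc' hu2.2.le hc ⟨hn, hu1⟩
    exact ⟨z, lt_of_lt_of_le hu2.1 hz.1, by rw [Zstair_eq, hz2]⟩
  refine ⟨Function.invFunOn_mem hex, ?_⟩
  rw [← Zstair_eq]
  exact Function.invFunOn_eq hex

lemma tseq_tendsto (r : ℕ) {x : ℝ} (hx : 0 < x) : Tendsto (tseq (r + 2) x) atTop (𝓝[>] 0) := by
  have hlim : Tendsto (fun n : ℕ => (n : ℝ) / x) atTop atTop :=
    tendsto_natCast_atTop_atTop.atTop_div_const hx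
  refine tendsto_nhdsWithin_iff.2 ⟨?_, (tseq_spec r hx).mono fun n hn => hn.1⟩
  rw [Metric.tendsto_nhds]
  intro ε hε
  filter_upwards [tseq_spec r hx, hlim.eventually_gt_atTop (MM r 1 ε)] with n hn hn2
  rw [Real.dist_eq, sub_zero, abs_of_pos hn.1]
  by_contra hcon
  have := MM_antitone r 1 hε (not_lt.1 hcon)
  rw [hn.2] at this
  linarith

lemma sqrt_facts (r : ℕ) {t : ℝ} (ht : 0 < t) : 0 < √(t ^ (r + 3)) ∧ √(t ^ (r + 3)) ^ 2 = t ^ (r + 3) ∧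
    √(t ^ (r + 3)) ^ 3 = t ^ (r + 4) * √(t ^ (r + 1)) := by
  have h2 : √(t ^ (r + 3)) ^ 2 = t ^ (r + 3) := Real.sq_sqrt (by positivity)
  refine ⟨by positivity, h2, ?_⟩
  have h1 : √(t ^ (r + 3)) = t * √(t ^ (r + 1)) := by
    rw [show t ^ (r + 3) = t ^ 2 * t ^ (r + 1) by ring, Real.sqrt_mul (by positivity), Real.sqrt_sq ht.le]
  rw [pow_succ, h2, h1]; ring

lemma sqrt_tendsto (k : ℕ) : Tendsto (fun t : ℝ => √(t ^ (k + 1))) (𝓝[>] 0) (𝓝 0) := by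
  have : Continuous (fun t : ℝ => √(t ^ (k + 1))) := by fun_prop
  simpa using (this.tendsto 0).mono_left nhdsWithin_le_nhds

lemma core_pointwise (r : ℕ) {x : ℝ} (t y : ℕ → ℝ) (c1 : ℝ)
    (ht : Tendsto t atTop (𝓝[>] 0)) (hy : Tendsto y atTop (𝓝 x))
    (hc : Tendsto (fun n => √(t n ^ (r + 3)) * (y n * MM r 1 (t n) - n)) atTop (𝓝 c1)) (φ : ℝ) :
    Tendsto (fun n : ℕ => -qfun (r + 2) n (y n) (t n) (√(t n ^ (r + 3)) * φ)) atTop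
      (𝓝 (Complex.I * c1 * φ - ((x * ((r + 2).factorial * Zp r) : ℝ) : ℂ) * φ ^ 2 / 2)) := by
  have htpos : ∀ᶠ n in atTop, 0 < t n := ht.eventually self_mem_nhdsWithin
  have hM2 := (MM_tendsto r 2).comp ht
  have hM3 := (MM_tendsto r 3).comp ht
  have hs := (sqrt_tendsto r).comp ht
  have herr : Tendsto (fun n => |y n| * (4 * |√(t n ^ (r + 3)) * φ| ^ 3 * MM r 3 (t n))) atTop (𝓝 0) := by
    have h := (((hy.abs).mul hM3).mul hs).mul_const (4 * |φ| ^ 3)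
    simp only [mul_zero, zero_mul] at h
    refine h.congr' ?_
    filter_upwards [htpos] with n hn
    obtain ⟨h1, h2, h3⟩ := sqrt_facts r hn
    rw [abs_mul, abs_of_pos h1, mul_pow, h3]
    simp only [Function.comp]
    ring
  have hmain : Tendsto (fun n : ℕ => Complex.I * ((y n * MM r 1 (t n) - n : ℝ) : ℂ) * ((√(t n ^ (r + 3)) * φ : ℝ) : ℂ) - ((y n * MM r 2 (t n) : ℝ) : ℂ) * ((√(t n ^ (r + 3)) * φ : ℝ) : ℂ) ^ 2 / 2) atTop
      (𝓝 (Complex.I * c1 * φ - ((x * ((r + 2).factorial * Zp r) : ℝ) : ℂ) * φ ^ 2 / 2)) := by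
    have a1 := (Complex.continuous_ofReal.tendsto _).comp hc
    have a2 := (Complex.continuous_ofReal.tendsto _).comp (hy.mul hM2)
    have a3 := ((a1.const_mul Complex.I).mul_const (φ : ℂ)).sub ((a2.mul_const ((φ : ℂ) ^ 2)).div_const 2)
    refine a3.congr' ?_
    filter_upwards [htpos] with n hn
    obtain ⟨h1, h2, h3⟩ := sqrt_facts r hn
    have h2' : ((√(t n ^ (r + 3)) : ℝ) : ℂ) ^ 2 = (t n : ℂ) ^ (r + 3) := by exact_mod_cast h2
    simp only [Function.comp]
    push_cast
    rw [mul_pow, h2']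
    ring
  have hz : Tendsto (fun n : ℕ => -qfun (r + 2) n (y n) (t n) (√(t n ^ (r + 3)) * φ) - (Complex.I * ((y n * MM r 1 (t n) - n : ℝ) : ℂ) * ((√(t n ^ (r + 3)) * φ : ℝ) : ℂ) - ((y n * MM r 2 (t n) : ℝ) : ℂ) * ((√(t n ^ (r + 3)) * φ : ℝ) : ℂ) ^ 2 / 2)) atTop (𝓝 0) := by
    refine squeeze_zero_norm' ?_ herr
    filter_upwards [htpos] with n hn
    exact q_taylor r n (y n) hn _
  have := hz.add hmain
  simpa only [sub_add_cancel, zero_add] using this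

lemma core_bound (r : ℕ) {x : ℝ} (hx : 0 < x) : ∃ C : ℝ, ∀ (n : ℕ) (t y φ : ℝ), 0 < t → t ≤ 1 → x / 2 ≤ y →
    |√(t ^ (r + 3)) * φ| ≤ π → ‖Complex.exp (-qfun (r + 2) n y t (√(t ^ (r + 3)) * φ))‖ ≤ C * (1 + φ ^ 2)⁻¹ := by
  obtain ⟨c, hc, hS⟩ := SS_lower r
  set c' := x / 2 * c with hc'
  have hc'0 : 0 < c' := by positivity
  refine ⟨(1 + 1 / c') + 6 / c' ^ 3 * (1 + π ^ 2), fun n t y φ ht ht1 hy hφ => ?_⟩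
  obtain ⟨h1, h2, h3⟩ := sqrt_facts r ht
  have hb1 : 0 ≤ (1 + 1 / c') := by positivity
  have hb2 : 0 ≤ 6 / c' ^ 3 * (1 + π ^ 2) := by positivity
  rw [Complex.norm_exp, q_re r n y ht, ← div_eq_mul_inv, le_div_iff₀ (by positivity)]
  have hy0 : 0 < y := by linarith
  rcases hS t _ ht ht1 hφ with h | h
  · rw [mul_pow, h2, mul_div_cancel_left₀ _ (by positivity)] at h
    have h4 : c' * φ ^ 2 ≤ y * SS r t (√(t ^ (r + 3)) * φ) := by
      calc _ = x / 2 * (c * φ ^ 2) := by rw [hc']; ring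
        _ ≤ _ := by gcongr
    have h5 : Real.exp (-(y * SS r t (√(t ^ (r + 3)) * φ))) ≤ (1 + c' * φ ^ 2)⁻¹ := by
      rw [Real.exp_neg]
      apply inv_anti₀ (by positivity)
      have := Real.add_one_le_exp (y * SS r t (√(t ^ (r + 3)) * φ))
      linarith
    calc _ ≤ (1 + c' * φ ^ 2)⁻¹ * (1 + φ ^ 2) := by gcongr
      _ ≤ 1 + 1 / c' := by
        rw [inv_mul_le_iff₀ (by positivity)]
        have : (1 + c' * φ ^ 2) * (1 + 1 / c') = 1 + 1 / c' + c' * φ ^ 2 + φ ^ 2 := by field_simp; ring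
        rw [this]
        have : 0 ≤ c' * φ ^ 2 := by positivity
        have : 0 < 1 / c' := by positivity
        linarith
      _ ≤ _ := by linarith
  · have h4 : c' * (1 / t) ^ (r + 1) ≤ y * SS r t (√(t ^ (r + 3)) * φ) := by
      calc _ = x / 2 * (c * (1 / t) ^ (r + 1)) := by rw [hc']; ring
        _ ≤ _ := by gcongr
    have h5 : Real.exp (-(y * SS r t (√(t ^ (r + 3)) * φ))) ≤ 6 / c' ^ 3 * t ^ (r + 3) := by
      set z := c' * (1 / t) ^ (r + 1) with hz
      have hz0 : 0 < z := by positivity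
      have e1 := Real.pow_div_factorial_le_exp z hz0.le 3
      calc _ ≤ Real.exp (-z) := by gcongr
        _ ≤ (z ^ 3 / (Nat.factorial 3))⁻¹ := by
          rw [Real.exp_neg]
          exact inv_anti₀ (by positivity) e1
        _ = 6 / c' ^ 3 * t ^ (3 * (r + 1)) := by
          rw [hz]
          norm_num [Nat.factorial, mul_pow, ← pow_mul]
          field_simp
          rw [mul_comm]
        _ ≤ _ := by
          gcongr ?_ * ?_
          exact pow_le_pow_of_le_one ht.le ht1 (by omega)
    have h6 : t ^ (r + 3) * φ ^ 2 ≤ π ^ 2 := by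
      rw [← h2, ← mul_pow, ← sq_abs]
      gcongr
    have h7 : t ^ (r + 3) ≤ 1 := pow_le_one₀ ht.le ht1
    calc _ ≤ 6 / c' ^ 3 * t ^ (r + 3) * (1 + φ ^ 2) := by gcongr
      _ = 6 / c' ^ 3 * (t ^ (r + 3) + t ^ (r + 3) * φ ^ 2) := by ring
      _ ≤ 6 / c' ^ 3 * (1 + π ^ 2) := by gcongr
      _ ≤ _ := by linarith

lemma core (r : ℕ) {x : ℝ} (hx : 0 < x) (t y : ℕ → ℝ) (c1 : ℝ)
    (ht : Tendsto t atTop (𝓝[>] 0)) (hy : Tendsto y atTop (𝓝 x))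
    (hc : Tendsto (fun n => √(t n ^ (r + 3)) * (y n * MM r 1 (t n) - n)) atTop (𝓝 c1)) :
    Tendsto (fun n : ℕ => ∫ φ : ℝ, (Set.Ioc (-(π / √(t n ^ (r + 3)))) (π / √(t n ^ (r + 3)))).indicator
      (fun φ => Complex.exp (-qfun (r + 2) n (y n) (t n) (√(t n ^ (r + 3)) * φ))) φ) atTop
      (𝓝 (∫ φ : ℝ, Complex.exp (Complex.I * c1 * φ - ((x * ((r + 2).factorial * Zp r) : ℝ) : ℂ) * φ ^ 2 / 2))) := by
  have htpos : ∀ᶠ n in atTop, 0 < t n := ht.eventually self_mem_nhdsWithin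
  have ht1 : ∀ᶠ n in atTop, t n ≤ 1 := by
    filter_upwards [ht.eventually (Ioo_mem_nhdsGT (show (0:ℝ) < 1 by norm_num))] with n hn using hn.2.le
  have hyx : ∀ᶠ n in atTop, x / 2 ≤ y n := hy.eventually_const_le (by linarith)
  obtain ⟨C, hC⟩ := core_bound r hx
  have hC0 : 0 ≤ C := by
    have := (norm_nonneg _).trans (hC 0 1 x 0 one_pos le_rfl (by linarith) (by simp [Real.pi_pos.le]))
    simpa using this
  refine tendsto_integral_filter_of_dominated_convergence (fun φ => C * (1 + φ ^ 2)⁻¹) ?_ ?_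
    (integrable_inv_one_add_sq.const_mul C) ?_
  · filter_upwards [htpos] with n hn
    have hcont : Continuous (fun φ => Complex.exp (-qfun (r + 2) n (y n) (t n) (√(t n ^ (r + 3)) * φ))) := by
      have := q_continuous r n (y n) hn
      fun_prop
    exact hcont.aestronglyMeasurable.indicator measurableSet_Ioc
  · filter_upwards [htpos, ht1, hyx] with n h1 h2 h3
    refine Eventually.of_forall fun φ => ?_
    obtain ⟨s1, s2, s3⟩ := sqrt_facts r h1
    by_cases hφ : φ ∈ Set.Ioc (-(π / √(t n ^ (r + 3)))) (π / √(t n ^ (r + 3)))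
    · rw [Set.indicator_of_mem hφ]
      refine hC n (t n) (y n) φ h1 h2 h3 ?_
      rw [abs_mul, abs_of_pos s1, mul_comm, ← le_div_iff₀ s1]
      exact abs_le.2 ⟨hφ.1.le, hφ.2⟩
    · rw [Set.indicator_of_notMem hφ, norm_zero]
      positivity
  · refine Eventually.of_forall fun φ => ?_
    have h := (Complex.continuous_exp.tendsto _).comp (core_pointwise r t y c1 ht hy hc φ)
    refine h.congr' ?_
    have hρ : Tendsto (fun n => √(t n ^ (r + 3)) * |φ|) atTop (𝓝 0) := by
      simpa using ((sqrt_tendsto (r + 2)).comp ht).mul_const |φ|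
    filter_upwards [htpos, hρ.eventually_lt_const Real.pi_pos] with n h1 h2
    obtain ⟨s1, s2, s3⟩ := sqrt_facts r h1
    rw [mul_comm, ← lt_div_iff₀ s1, abs_lt] at h2
    have hmem : φ ∈ Set.Ioc (-(π / √(t n ^ (r + 3)))) (π / √(t n ^ (r + 3))) := ⟨h2.1, h2.2.le⟩
    rw [Set.indicator_of_mem hmem]
    rfl

lemma gauss (c1 c2 : ℝ) (h : 0 < c2) :
    ∫ φ : ℝ, Complex.exp (Complex.I * c1 * φ - (c2 : ℂ) * φ ^ 2 / 2) =
      ((√(2 * π / c2) * Real.exp (-(c1 ^ 2 / (2 * c2))) : ℝ) : ℂ) := by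
  have h1 := fourierIntegral_gaussian (b := ((c2 / 2 : ℝ) : ℂ)) (by simpa using by positivity) (c1 : ℂ)
  have e : ∀ φ : ℝ, Complex.exp (Complex.I * c1 * φ - (c2 : ℂ) * φ ^ 2 / 2) =
      Complex.exp (Complex.I * c1 * φ) * Complex.exp (-((c2 / 2 : ℝ) : ℂ) * φ ^ 2) := fun φ => by
    rw [← Complex.exp_add]; congr 1; push_cast; ring
  simp_rw [e]
  rw [h1]
  push_cast
  congr 1
  · rw [Real.sqrt_eq_rpow, Complex.ofReal_cpow (by positivity)]
    push_cast
    congr 1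
    field_simp
  · congr 1
    have : (c2 : ℂ) ≠ 0 := by exact_mod_cast h.ne'
    field_simp
    ring

lemma R_tendsto (r : ℕ) {x : ℝ} (hx : 0 < x) :
    Tendsto (fun n : ℕ => (n : ℝ) * tseq (r + 2) x n ^ (r + 2)) atTop (𝓝 (x * Kconst (r + 2))) := by
  have h := ((MM_tendsto r 1).comp (tseq_tendsto r hx)).const_mul x
  rw [Kconst_eq]
  refine h.congr' ?_
  filter_upwards [tseq_spec r hx] with n hn
  simp only [Function.comp]
  rw [hn.2]
  field_simp

lemma key_tendsto (r : ℕ) {x : ℝ} (hx : 0 < x) (hA : 0 < x * Kconst (r + 2)) :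
    Tendsto (fun n : ℕ => √(tseq (r + 2) x n ^ (r + 3)) *
      (n : ℝ) ^ ((((r + 2 : ℕ) : ℝ) + 1) / (2 * ((r + 2 : ℕ) : ℝ)))) atTop
      (𝓝 ((x * Kconst (r + 2)) ^ ((((r + 2 : ℕ) : ℝ) + 1) / (2 * ((r + 2 : ℕ) : ℝ))))) := by
  have h := (R_tendsto r hx).rpow_const (p := (((r + 2 : ℕ) : ℝ) + 1) / (2 * ((r + 2 : ℕ) : ℝ))) (Or.inl hA.ne')
  refine h.congr' ?_
  filter_upwards [tseq_spec r hx] with n hn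
  have ht := hn.1
  generalize tseq (r + 2) x n = t at ht
  rw [Real.mul_rpow (by positivity) (by positivity), mul_comm]
  congr 1
  rw [Real.sqrt_eq_rpow, ← Real.rpow_natCast, ← Real.rpow_natCast, ← Real.rpow_mul ht.le, ← Real.rpow_mul ht.le]
  congr 1
  push_cast
  field_simp
  ring

lemma b_tendsto (r : ℕ) {x : ℝ} (hA : 0 < x * Kconst (r + 2)) :
    Tendsto (bseq (r + 2) x) atTop atTop := by
  unfold bseq
  refine Tendsto.const_mul_atTop ?_ ?_
  · have : (0:ℝ) < ((r + 2 : ℕ) : ℝ) * (((r + 2 : ℕ) : ℝ) - 1) := by push_cast; nlinarith [(Nat.cast_nonneg r : (0:ℝ) ≤ r)]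
    positivity
  · refine (tendsto_rpow_atTop ?_).comp tendsto_natCast_atTop_atTop
    have : (0:ℝ) < (((r + 2 : ℕ) : ℝ) - 1) := by push_cast; linarith [(Nat.cast_nonneg r : (0:ℝ) ≤ r)]
    positivity

lemma exp_slope (s : ℝ) : Tendsto (fun b : ℝ => b * (Real.exp (s / b) - 1)) atTop (𝓝 s) := by
  have h : HasDerivAt (fun h : ℝ => Real.exp (s * h)) s 0 := by
    have := ((hasDerivAt_id (0:ℝ)).const_mul s).exp
    simpa using this
  have h2 := h.tendsto_slope_zero_right.comp tendsto_inv_atTop_nhdsGT_zero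
  refine h2.congr fun b => ?_
  simp [Function.comp, div_eq_mul_inv]

lemma x_tendsto (r : ℕ) {x : ℝ} (s : ℝ) (hA : 0 < x * Kconst (r + 2)) :
    Tendsto (xseq (r + 2) x s) atTop (𝓝 x) := by
  unfold xseq
  have h : Tendsto (fun n => s / bseq (r + 2) x n) atTop (𝓝 0) := (b_tendsto r hA).const_div_atTop s
  have := ((Real.continuous_exp.tendsto _).comp h).const_mul x
  simpa using this

lemma c1_tendsto (r : ℕ) {x : ℝ} (s : ℝ) (hx : 0 < x) (hA : 0 < x * Kconst (r + 2)) :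
    Tendsto (fun n : ℕ => √(tseq (r + 2) x n ^ (r + 3)) * (xseq (r + 2) x s n * MM r 1 (tseq (r + 2) x n) - n))
     atTop (𝓝 (s * √(x * Kconst (r + 2)) * √(((r + 2 : ℕ) : ℝ) * (((r + 2 : ℕ) : ℝ) - 1)))) := by
  have h := ((key_tendsto r hx hA).mul_const (√(((r + 2 : ℕ) : ℝ) * (((r + 2 : ℕ) : ℝ) - 1)) /
    (x * Kconst (r + 2)) ^ ((1:ℝ) / (2 * ((r + 2 : ℕ) : ℝ))))).mul ((exp_slope s).comp (b_tendsto r hA))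
  have hl : (0:ℝ) < ((r + 2 : ℕ) : ℝ) * (((r + 2 : ℕ) : ℝ) - 1) := by push_cast; nlinarith [(Nat.cast_nonneg r : (0:ℝ) ≤ r)]
  have hA' : 0 < (x * Kconst (r + 2)) ^ ((1:ℝ) / (2 * ((r + 2 : ℕ) : ℝ))) := by positivity
  have hsq : 0 < √(((r + 2 : ℕ) : ℝ) * (((r + 2 : ℕ) : ℝ) - 1)) := by positivity
  convert h.congr' ?_ using 2
  · have : √(x * Kconst (r + 2)) = (x * Kconst (r + 2)) ^ ((((r + 2 : ℕ) : ℝ) + 1) / (2 * ((r + 2 : ℕ) : ℝ))) /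
        (x * Kconst (r + 2)) ^ ((1:ℝ) / (2 * ((r + 2 : ℕ) : ℝ))) := by
      rw [Real.sqrt_eq_rpow, ← Real.rpow_sub hA]
      congr 1
      push_cast
      field_simp
      ring
    rw [this]; ring
  · filter_upwards [tseq_spec r hx, eventually_gt_atTop 0] with n hn hn0
    have hn0 : (0:ℝ) < n := by exact_mod_cast hn0
    rw [hn.2, xseq]
    simp only [Function.comp]
    have e1 : x * Real.exp (s / bseq (r + 2) x n) * (n / x) - n = n * (Real.exp (s / bseq (r + 2) x n) - 1) := by
      field_simp
    rw [e1]
    have e2 : (n : ℝ) = (n : ℝ) ^ ((((r + 2 : ℕ) : ℝ) + 1) / (2 * ((r + 2 : ℕ) : ℝ))) *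
        (√(((r + 2 : ℕ) : ℝ) * (((r + 2 : ℕ) : ℝ) - 1)) /
    (x * Kconst (r + 2)) ^ ((1:ℝ) / (2 * ((r + 2 : ℕ) : ℝ)))) * bseq (r + 2) x n := by
      rw [bseq]
      have : (n : ℝ) = (n : ℝ) ^ ((((r + 2 : ℕ) : ℝ) + 1) / (2 * ((r + 2 : ℕ) : ℝ))) *
          (n : ℝ) ^ ((((r + 2 : ℕ) : ℝ) - 1) / (2 * ((r + 2 : ℕ) : ℝ))) := by
        rw [← Real.rpow_add hn0]
        conv_lhs => rw [← Real.rpow_one (n : ℝ)]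
        congr 1
        push_cast
        field_simp
        ring
      conv_lhs => rw [this]
      generalize (n : ℝ) ^ ((((r + 2 : ℕ) : ℝ) + 1) / (2 * ((r + 2 : ℕ) : ℝ))) = P
      generalize (n : ℝ) ^ ((((r + 2 : ℕ) : ℝ) - 1) / (2 * ((r + 2 : ℕ) : ℝ))) = Q
      generalize (x * Kconst (r + 2)) ^ ((1:ℝ) / (2 * ((r + 2 : ℕ) : ℝ))) = R at *
      generalize √(((r + 2 : ℕ) : ℝ) * (((r + 2 : ℕ) : ℝ) - 1)) = S at *
      field_simp
    conv_rhs => rw [e2]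
    ring

lemma const_eq (r : ℕ) (A s : ℝ) (hA : 0 < A) :
    (1 / (2 * π) * (√(2 * π * ((r + 2 : ℕ) : ℝ)) / (A ^ ((1:ℝ) / (2 * ((r + 2 : ℕ) : ℝ))) *
      Real.exp (-(((r + 2 : ℕ) : ℝ) - 1) * s ^ 2 / 2)))) *
      A ^ ((((r + 2 : ℕ) : ℝ) + 1) / (2 * ((r + 2 : ℕ) : ℝ))) *
      (√(2 * π / (((r + 2 : ℕ) : ℝ) * A)) * Real.exp (-((s * √A * √(((r + 2 : ℕ) : ℝ) * (((r + 2 : ℕ) : ℝ) - 1))) ^ 2 / (2 * (((r + 2 : ℕ) : ℝ) * A))))) = 1 := by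
  have hl : (0:ℝ) < ((r + 2 : ℕ) : ℝ) * (((r + 2 : ℕ) : ℝ) - 1) := by push_cast; nlinarith [(Nat.cast_nonneg r : (0:ℝ) ≤ r)]
  have hl2 : (0:ℝ) < ((r + 2 : ℕ) : ℝ) := by positivity
  have hpi := Real.pi_pos
  have h1 : A ^ ((((r + 2 : ℕ) : ℝ) + 1) / (2 * ((r + 2 : ℕ) : ℝ))) = A ^ ((1:ℝ) / (2 * ((r + 2 : ℕ) : ℝ))) * √A := by
    rw [Real.sqrt_eq_rpow, ← Real.rpow_add hA]
    congr 1
    field_simp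
    ring
  have h2 : -((s * √A * √(((r + 2 : ℕ) : ℝ) * (((r + 2 : ℕ) : ℝ) - 1))) ^ 2 / (2 * (((r + 2 : ℕ) : ℝ) * A))) =
      -(((r + 2 : ℕ) : ℝ) - 1) * s ^ 2 / 2 := by
    rw [mul_pow, mul_pow, Real.sq_sqrt hA.le, Real.sq_sqrt hl.le]
    field_simp
  have h3 : √(2 * π * ((r + 2 : ℕ) : ℝ)) * √A * √(2 * π / (((r + 2 : ℕ) : ℝ) * A)) = 2 * π := by
    rw [← Real.sqrt_mul (by positivity), ← Real.sqrt_mul (by positivity)]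
    rw [show 2 * π * ((r + 2 : ℕ) : ℝ) * A * (2 * π / (((r + 2 : ℕ) : ℝ) * A)) = (2 * π) ^ 2 by field_simp]
    exact Real.sqrt_sq (by positivity)
  rw [h1, h2]
  have hA' : 0 < A ^ ((1:ℝ) / (2 * ((r + 2 : ℕ) : ℝ))) := by positivity
  have hE := Real.exp_pos (-(((r + 2 : ℕ) : ℝ) - 1) * s ^ 2 / 2)
  generalize A ^ ((1:ℝ) / (2 * ((r + 2 : ℕ) : ℝ))) = R at *
  generalize Real.exp (-(((r + 2 : ℕ) : ℝ) - 1) * s ^ 2 / 2) = E at *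
  calc _ = 1 / (2 * π) * (√(2 * π * ((r + 2 : ℕ) : ℝ)) * √A * √(2 * π / (((r + 2 : ℕ) : ℝ) * A))) := by
        field_simp
    _ = 1 := by rw [h3]; field_simp

lemma interval_to_indicator (f : ℝ → ℂ) {ρ : ℝ} (hρ : 0 < ρ) :
    ∫ θ in (-π)..π, f θ = ρ * ∫ φ : ℝ, (Set.Ioc (-(π / ρ)) (π / ρ)).indicator (fun φ => f (ρ * φ)) φ := by
  have hpi := Real.pi_pos
  rw [integral_indicator measurableSet_Ioc, ← intervalIntegral.integral_of_le (by
    have : 0 < π / ρ := by positivity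
    linarith)]
  have h := intervalIntegral.smul_integral_comp_mul_left (a := -(π / ρ)) (b := π / ρ) f ρ
  rw [mul_neg, mul_div_cancel₀ _ hρ.ne'] at h
  rw [← h, Complex.real_smul]

/-- asymptotics of the integral
`J_{ℓ,n}(x_n,t_n) ~ ((x K_ℓ)^{1/(2ℓ)}/√(2πℓ)) n^{-(ℓ+1)/(2ℓ)} e^{-(ℓ-1)s²/2}`. -/
theorem J_integral_asymptotic (ℓ : ℕ) (hℓ : 2 ≤ ℓ) (x s : ℝ) (hx : 0 < x) :
    Tendsto (fun n : ℕ =>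
        (((1 / (2 * π) : ℝ) : ℂ) *
            ∫ θ in (-π)..π, Complex.exp (-qfun ℓ n (xseq ℓ x s n) (tseq ℓ x n) θ)) /
          ((((x * Kconst ℓ) ^ ((1 : ℝ) / (2 * (ℓ : ℝ))) / Real.sqrt (2 * π * (ℓ : ℝ)) *
              (n : ℝ) ^ (-(((ℓ : ℝ) + 1) / (2 * (ℓ : ℝ)))) *
              Real.exp (-((ℓ : ℝ) - 1) * s ^ 2 / 2) : ℝ) : ℂ)))
      atTop (nhds 1) := by
  obtain ⟨r, rfl⟩ : ∃ r, ℓ = r + 2 := ⟨ℓ - 2, by omega⟩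
  have hK : 0 < Kconst (r + 2) := by
    rw [Kconst_eq]; have := Zp_pos r; positivity
  have hA : 0 < x * Kconst (r + 2) := by positivity
  have hcore := core r hx _ _ _ (tseq_tendsto r hx) (x_tendsto r s hA) (c1_tendsto r s hx hA)
  have hc2 : x * (((r + 2).factorial : ℝ) * Zp r) = ((r + 2 : ℕ) : ℝ) * (x * Kconst (r + 2)) := by
    rw [Kconst_eq, Nat.factorial_succ (r + 1)]; push_cast; ring
  rw [hc2, gauss _ _ (by positivity)] at hcore
  have hkey := (Complex.continuous_ofReal.tendsto _).comp (key_tendsto r hx hA)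
  have h := (hkey.const_mul (((1 / (2 * π) * (√(2 * π * ((r + 2 : ℕ) : ℝ)) / ((x * Kconst (r + 2)) ^ ((1:ℝ) / (2 * ((r + 2 : ℕ) : ℝ))) *
      Real.exp (-(((r + 2 : ℕ) : ℝ) - 1) * s ^ 2 / 2))) : ℝ)) : ℂ)).mul hcore
  rw [← Complex.ofReal_mul, ← Complex.ofReal_mul, const_eq r _ s hA, Complex.ofReal_one] at h
  refine h.congr' ?_
  filter_upwards [tseq_spec r hx, eventually_gt_atTop 0] with n hn hn0
  have hn0 : (0:ℝ) < n := by exact_mod_cast hn0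
  obtain ⟨s1, -, -⟩ := sqrt_facts r hn.1
  rw [interval_to_indicator _ s1]
  generalize (∫ φ : ℝ, (Set.Ioc (-(π / √(tseq (r + 2) x n ^ (r + 3)))) (π / √(tseq (r + 2) x n ^ (r + 3)))).indicator
      (fun φ => Complex.exp (-qfun (r + 2) n (xseq (r + 2) x s n) (tseq (r + 2) x n) (√(tseq (r + 2) x n ^ (r + 3)) * φ))) φ) = I
  rw [Real.rpow_neg hn0.le]
  have p1 : 0 < (x * Kconst (r + 2)) ^ ((1:ℝ) / (2 * ((r + 2 : ℕ) : ℝ))) := by positivity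
  have p2 : 0 < (n : ℝ) ^ ((((r + 2 : ℕ) : ℝ) + 1) / (2 * ((r + 2 : ℕ) : ℝ))) := by positivity
  have p3 := Real.exp_pos (-(((r + 2 : ℕ) : ℝ) - 1) * s ^ 2 / 2)
  have p4 : 0 < √(2 * π * ((r + 2 : ℕ) : ℝ)) := by positivity
  have hpi := Real.pi_pos
  simp only [Function.comp]
  generalize (x * Kconst (r + 2)) ^ ((1:ℝ) / (2 * ((r + 2 : ℕ) : ℝ))) = a at *
  generalize (n : ℝ) ^ ((((r + 2 : ℕ) : ℝ) + 1) / (2 * ((r + 2 : ℕ) : ℝ))) = b at *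
  generalize Real.exp (-(((r + 2 : ℕ) : ℝ) - 1) * s ^ 2 / 2) = c at *
  generalize √(2 * π * ((r + 2 : ℕ) : ℝ)) = d at *
  generalize √(tseq (r + 2) x n ^ (r + 3)) = e at *
  have q1 : (a : ℂ) ≠ 0 := by exact_mod_cast p1.ne'
  have q2 : (b : ℂ) ≠ 0 := by exact_mod_cast p2.ne'
  have q3 : (c : ℂ) ≠ 0 := by exact_mod_cast p3.ne'
  have q4 : (d : ℂ) ≠ 0 := by exact_mod_cast p4.ne'
  push_cast
  field_simp
end
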